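/- Let A be a subset of ℝ⁺. Then A ∈ Î(SP) holds if and only if A ∪ E is strongly porous at 0 for every strongly porous at 0 set E ⊆ ℝ⁺. -/

import Mathlib

/-!
A set `A` lies in every `SP`-maximal ideal iff adding `A` never destroys strong porosity.

* If `A ∪ E ∈ SP` for all `E ∈ SP`, then for every `SP`-maximal ideal `I` the sets
  `B ⊆ A ∪ C` with `C ∈ I` form an ideal contained in `SP` and containing `I`. By maximality it
  equals `I`, so `A ∈ I`.
* Conversely, given `E ∈ SP`, the subsets of `E` form an ideal contained in `SP`, which by Zorn's
  lemma extends to an `SP`-maximal ideal `I`. Both `A` and `E` lie in `I`, hence so does `A ∪ E`,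
  and `I ⊆ SP`.

The only facts about porosity involved are that `SP` is closed under subsets (`SP_of_subset`) and
that `Set.Ici 0` itself is not strongly porous (`Ici_notMem_SP`); the latter makes properness
automatic for any family contained in `SP`.
-/

open Filter Set

/-- `gapLength E h` = λ(E,h): the length of the largest open subinterval of (0,h)
containing no point of `E` (0 if no such interval exists). -/
noncomputable def gapLength (E : Set ℝ) (h : ℝ) : ℝ :=
  sSup {l : ℝ | ∃ a b : ℝ, 0 ≤ a ∧ a ≤ b ∧ b ≤ h ∧ Set.Ioo a b ∩ E = ∅ ∧ l = b - a}

/-- The right upper porosity of `E` at 0. -/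
noncomputable def upperPorosity (E : Set ℝ) : ℝ :=
  Filter.limsup (fun h => gapLength E h / h) (nhdsWithin (0:ℝ) (Set.Ioi 0))

/-- The right lower porosity of `E` at 0. -/
noncomputable def lowerPorosity (E : Set ℝ) : ℝ :=
  Filter.liminf (fun h => gapLength E h / h) (nhdsWithin (0:ℝ) (Set.Ioi 0))

/-- `UMP E`: sequences of positive reals tending to 0 along which the upper limit
in the definition of porosity is attained. -/
def UMP (E : Set ℝ) : Set (ℕ → ℝ) :=
  {h | (∀ n, 0 < h n) ∧ Filter.Tendsto h Filter.atTop (nhds 0) ∧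
    Filter.Tendsto (fun n => gapLength E (h n) / h n) Filter.atTop (nhds (upperPorosity E))}

/-- The set of all strongly porous at 0 subsets of ℝ⁺. -/
def SP : Set (Set ℝ) := {E | E ⊆ Set.Ici 0 ∧ upperPorosity E = 1}

/-- `I` is an ideal on the set `X`. -/
def IsIdealOn (X : Set ℝ) (I : Set (Set ℝ)) : Prop :=
  I.Nonempty ∧ (∀ B ∈ I, B ⊆ X) ∧ (∀ B ∈ I, ∀ C : Set ℝ, C ⊆ B → C ∈ I) ∧
    (∀ B ∈ I, ∀ C ∈ I, B ∪ C ∈ I) ∧ X ∉ I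

/-- `I` is a `Γ`-maximal ideal on `X`. -/
def IsMaximalIdealIn (X : Set ℝ) (Γ I : Set (Set ℝ)) : Prop :=
  IsIdealOn X I ∧ I ⊆ Γ ∧ ∀ J : Set (Set ℝ), IsIdealOn X J → I ⊆ J → J ⊆ Γ → I = J

/-- `Î(SP)`: the intersection of all SP-maximal ideals on ℝ⁺. -/
def hatISP : Set (Set ℝ) :=
  {A | ∀ I : Set (Set ℝ), IsMaximalIdealIn (Set.Ici 0) SP I → A ∈ I}

/-- The q-blow up `E(q)` of a set `E ⊆ ℝ⁺`. -/
def blowUp (E : Set ℝ) (q : ℝ) : Set ℝ := ⋃ x ∈ E, Set.Ioo (q⁻¹ * x) (q * x)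

theorem gapLength_le {E : Set ℝ} {h : ℝ} (hh : 0 < h) : gapLength E h ≤ h := by
  refine csSup_le ⟨0, 0, 0, le_rfl, le_rfl, hh.le, by simp, by simp⟩ ?_
  rintro l ⟨a, b, ha, -, hb, -, rfl⟩
  linarith

theorem gapLength_nonneg (E : Set ℝ) (h : ℝ) : 0 ≤ gapLength E h := by
  refine Real.sSup_nonneg ?_
  rintro l ⟨a, b, -, hab, -, -, rfl⟩
  linarith

theorem gapLength_anti {B C : Set ℝ} (hBC : B ⊆ C) {h : ℝ} (hh : 0 < h) :
    gapLength C h ≤ gapLength B h := by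
  refine csSup_le_csSup ⟨h, ?_⟩ ⟨0, 0, 0, le_rfl, le_rfl, hh.le, by simp, by simp⟩ ?_
  · rintro l ⟨a, b, ha, -, hb, -, rfl⟩
    linarith
  · rintro l ⟨a, b, ha, hab, hb, he, rfl⟩
    exact ⟨a, b, ha, hab, hb,
      Set.subset_empty_iff.1 (he ▸ Set.inter_subset_inter_right _ hBC), rfl⟩

theorem eventually_gapLength_div_le_one (E : Set ℝ) :
    ∀ᶠ h in nhdsWithin (0:ℝ) (Set.Ioi 0), gapLength E h / h ≤ 1 := by
  filter_upwards [self_mem_nhdsWithin] with h hh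
  exact (div_le_one hh).2 (gapLength_le hh)

theorem eventually_gapLength_div_nonneg (E : Set ℝ) :
    ∀ᶠ h in nhdsWithin (0:ℝ) (Set.Ioi 0), 0 ≤ gapLength E h / h := by
  filter_upwards [self_mem_nhdsWithin] with h hh
  exact div_nonneg (gapLength_nonneg E h) (le_of_lt hh)

theorem upperPorosity_le_one (E : Set ℝ) : upperPorosity E ≤ 1 :=
  Filter.limsup_le_of_le
    (Filter.isBoundedUnder_of_eventually_ge
      (eventually_gapLength_div_nonneg E)).isCoboundedUnder_le
    (eventually_gapLength_div_le_one E)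

theorem upperPorosity_anti {B C : Set ℝ} (hBC : B ⊆ C) :
    upperPorosity C ≤ upperPorosity B := by
  refine Filter.limsup_le_limsup ?_
    (Filter.isBoundedUnder_of_eventually_ge
      (eventually_gapLength_div_nonneg C)).isCoboundedUnder_le
    (Filter.isBoundedUnder_of_eventually_le (eventually_gapLength_div_le_one B))
  filter_upwards [self_mem_nhdsWithin] with h hh
  exact div_le_div_of_nonneg_right (gapLength_anti hBC hh) (le_of_lt hh)

theorem SP_of_subset {B C : Set ℝ} (hC : C ∈ SP) (hBC : B ⊆ C) : B ∈ SP :=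
  ⟨hBC.trans hC.1, le_antisymm (upperPorosity_le_one B) (hC.2 ▸ upperPorosity_anti hBC)⟩

theorem gapLength_Ici (h : ℝ) : gapLength (Set.Ici 0) h = 0 := by
  refine le_antisymm (Real.sSup_nonpos ?_) (gapLength_nonneg _ _)
  rintro l ⟨a, b, ha, -, -, he, rfl⟩
  by_contra! hlt
  -- A nondegenerate gap would contain its own midpoint.
  have hm : (a + b) / 2 ∈ Set.Ioo a b ∩ Set.Ici 0 :=
    ⟨⟨by linarith, by linarith⟩, show (0:ℝ) ≤ (a + b) / 2 by linarith⟩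
  rw [he] at hm
  exact hm

theorem Ici_notMem_SP : Set.Ici (0:ℝ) ∉ SP := by
  rintro ⟨-, h⟩
  simp [upperPorosity, gapLength_Ici] at h

/-- Every ideal contained in `SP` extends to an `SP`-maximal ideal. -/
theorem exists_maximal_ideal {I₀ : Set (Set ℝ)} (h₀ : IsIdealOn (Set.Ici 0) I₀)
    (h₀SP : I₀ ⊆ SP) : ∃ I, IsMaximalIdealIn (Set.Ici 0) SP I ∧ I₀ ⊆ I := by
  obtain ⟨I, hI₀, hI⟩ := zorn_subset_nonempty {J | IsIdealOn (Set.Ici 0) J ∧ J ⊆ SP} (by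
    intro c hc hchain hne
    have hSP : ⋃₀ c ⊆ SP := Set.sUnion_subset fun J hJ => (hc hJ).2
    refine ⟨⋃₀ c, ⟨⟨?_, ?_, ?_, ?_, fun h => Ici_notMem_SP (hSP h)⟩, hSP⟩,
      fun J hJ => Set.subset_sUnion_of_mem hJ⟩
    · obtain ⟨J, hJ⟩ := hne
      obtain ⟨B, hB⟩ := (hc hJ).1.1
      exact ⟨B, J, hJ, hB⟩
    · exact fun B hB => (hSP hB).1
    · rintro B ⟨J, hJ, hB⟩ C hCB
      exact ⟨J, hJ, (hc hJ).1.2.2.1 B hB C hCB⟩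
    · rintro B ⟨J, hJ, hB⟩ C ⟨K, hK, hC⟩
      rcases hchain.total hJ hK with h | h
      · exact ⟨K, hK, (hc hK).1.2.2.2.1 B (h hB) C hC⟩
      · exact ⟨J, hJ, (hc hJ).1.2.2.2.1 B hB C (h hC)⟩) I₀ ⟨h₀, h₀SP⟩
  exact ⟨I, ⟨hI.prop.1, hI.prop.2, fun J hJ hIJ hJSP =>
    hIJ.antisymm (hI.le_of_ge ⟨hJ, hJSP⟩ hIJ)⟩, hI₀⟩

theorem stmt10 (A : Set ℝ) (hA : A ⊆ Set.Ici 0) :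
    A ∈ hatISP ↔ ∀ E ∈ SP, A ∪ E ∈ SP := by
  constructor
  · intro h E hE
    obtain ⟨I, hI, hEI⟩ := exists_maximal_ideal (I₀ := {B | B ⊆ E})
      ⟨⟨E, Set.Subset.refl E⟩, fun B hB => hB.trans hE.1, fun B hB C hCB => hCB.trans hB,
        fun B hB C hC => Set.union_subset hB hC,
        fun hX => Ici_notMem_SP (SP_of_subset hE hX)⟩
      (fun B hB => SP_of_subset hE hB)
    exact hI.2.1 (hI.1.2.2.2.1 A (h I hI) E (hEI (Set.Subset.refl E)))
  · rintro h I ⟨⟨⟨B₀, hB₀⟩, hsub, hdown, hunion, hX⟩, hISP, hmax⟩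
    have hJSP : {B | ∃ C ∈ I, B ⊆ A ∪ C} ⊆ SP := by
      rintro B ⟨C, hC, hB⟩
      exact SP_of_subset (h C (hISP hC)) hB
    have hIJ := hmax {B | ∃ C ∈ I, B ⊆ A ∪ C}
      ⟨⟨A, B₀, hB₀, Set.subset_union_left⟩, fun B hB => (hJSP hB).1,
        fun B ⟨C, hC, hB⟩ D hD => ⟨C, hC, hD.trans hB⟩,
        fun B ⟨C, hC, hB⟩ B' ⟨C', hC', hB'⟩ => ⟨C ∪ C', hunion C hC C' hC',
          Set.union_subset
            (hB.trans (Set.union_subset_union_right A Set.subset_union_left))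
            (hB'.trans (Set.union_subset_union_right A Set.subset_union_right))⟩,
        fun hX' => Ici_notMem_SP (hJSP hX')⟩
      (fun B hB => ⟨B, hB, Set.subset_union_right⟩) hJSP
    rw [hIJ]
    exact ⟨B₀, hB₀, Set.subset_union_left⟩
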